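/- Let G be a finite group and N a normal subgroup such that G/N is cyclic, generated by the coset of q ∈ G. Then the number of conjugacy classes of G contained in qN equals the number of irreducible complex characters τ of N that extend to a character of G (i.e. for which there exists an irreducible character ρ of G with Res_N ρ = τ). -/

import Mathlib

open scoped BigOperators

/-- `ρ : G → ℂ` is the character of an irreducible (simple) finite-dimensional
complex representation of `G`. -/
def IsIrrChar (G : Type) [Group G] (ρ : G → ℂ) : Prop :=
  ∃ V : FDRep ℂ G, CategoryTheory.Simple V ∧ ρ = V.character

/-- `Θ : G → ℂ` is the character of some finite-dimensional complex representation of `G`. -/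
def IsChar (G : Type) [Group G] (Θ : G → ℂ) : Prop :=
  ∃ V : FDRep ℂ G, Θ = V.character

variable {G : Type} [Group G]

/-- The action of a character `χ ∈ Q̂` (where `Q = G ⧸ N`) on a function `ρ : G → ℂ`:
`(χ · ρ)(g) = χ(gN) · ρ(g)`. -/
def charMul (N : Subgroup G) [N.Normal] (χ : (G ⧸ N) →* ℂˣ) (ρ : G → ℂ) : G → ℂ :=
  fun g => (χ (g : G ⧸ N) : ℂ) * ρ g

/-- The orbit of `ρ` under the tensoring action of `Q̂ = Hom(G ⧸ N, ℂˣ)`. -/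
def qhatOrbit (N : Subgroup G) [N.Normal] (ρ : G → ℂ) : Set (G → ℂ) :=
  {ρ' | ∃ χ : (G ⧸ N) →* ℂˣ, ρ' = charMul N χ ρ}

/-- The coset `qN`, as a subset of `G`. -/
def coset (N : Subgroup G) [N.Normal] (q : G) : Set G :=
  {g | (g : G ⧸ N) = (q : G ⧸ N)}

/-- `C_q`: the set of conjugacy classes of `G` contained in the coset `qN`. -/
def Cset (N : Subgroup G) [N.Normal] (q : G) : Set (ConjClasses G) :=
  {c | c.carrier ⊆ coset N q}

/-- `R_q`: the set of `Q̂`-orbits on the irreducible characters of `G`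
containing a character not identically zero on `qN`. -/
def Rset (N : Subgroup G) [N.Normal] (q : G) : Set (Set (G → ℂ)) :=
  {S | (∃ ρ, IsIrrChar G ρ ∧ S = qhatOrbit N ρ) ∧ ∃ ρ' ∈ S, ∃ g ∈ coset N q, ρ' g ≠ 0}

/-- The class function `π_x` for `x ∈ Q = G ⧸ N`:
`π_x(g) = (1/#Q̂) ∑_{χ ∈ Q̂} conj(χ(x)) χ(gN)`. -/
noncomputable def piQ (N : Subgroup G) [N.Normal] (x : G ⧸ N) : G → ℂ :=
  fun g => (Nat.card ((G ⧸ N) →* ℂˣ) : ℂ)⁻¹ *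
    ∑ᶠ χ : (G ⧸ N) →* ℂˣ, (starRingEnd ℂ) (χ x : ℂ) * (χ (g : G ⧸ N) : ℂ)

/-- The space of class functions on `G`, as a submodule of `G → ℂ`. -/
noncomputable def classFunSubmodule (G : Type) [Group G] : Submodule ℂ (G → ℂ) where
  carrier := {f | ∀ g h : G, f (h * g * h⁻¹) = f g}
  add_mem' := by intro a b ha hb g h; simp only [Pi.add_apply, ha g h, hb g h]
  zero_mem' := by intro g h; rfl
  smul_mem' := by intro c f hf g h; simp only [Pi.smul_apply, hf g h]

/-- The space of class functions on `G` vanishing outside the coset `qN`. -/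
noncomputable def cosetClassFun (N : Subgroup G) [N.Normal] (q : G) : Submodule ℂ (G → ℂ) where
  carrier := {f | (∀ g h : G, f (h * g * h⁻¹) = f g) ∧ ∀ g, g ∉ coset N q → f g = 0}
  add_mem' := by
    intro a b ha hb
    exact ⟨fun g h => by simp only [Pi.add_apply, ha.1 g h, hb.1 g h],
      fun g hg => by simp only [Pi.add_apply, ha.2 g hg, hb.2 g hg, add_zero]⟩
  zero_mem' := ⟨fun g h => rfl, fun g hg => rfl⟩
  smul_mem' := by
    intro c f hf
    exact ⟨fun g h => by simp only [Pi.smul_apply, hf.1 g h],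
      fun g hg => by simp only [Pi.smul_apply, hf.2 g hg, smul_zero]⟩

/-!
Let `Q = G ⧸ N`. When `Q` is abelian, averaging the orthogonality relations for `χ · φ` and `ψ`
over `χ ∈ Q̂` gives, for irreducible characters `φ` and `ψ` of `G`,
`∑_{g ∈ qN} φ(g) ψ(g⁻¹) = |N| ∑_{χ · φ = ψ} χ(q)⁻¹`.
So characters in different `Q̂`-orbits are orthogonal over `qN`, and one representative of each
orbit not vanishing on `qN` yields a basis of the class functions supported on `qN`: the classes
in `qN` are as many as these orbits.

Suppose that `qN` generates `Q`. The same formula over `N` shows that `φ` restricts irreducibly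
to `N` exactly when its stabiliser in `Q̂` is trivial, and that `φ` and `ψ` have the same
restriction exactly when they lie in one orbit; over `qN` it shows that `φ` is not identically zero
on `qN` exactly when its stabiliser is trivial. Hence restriction to `N` turns those orbits into
the extendable characters.
-/

section CharacterTheory

open MonoidAlgebra Representation

lemma commute_sum_smul {k G V : Type*} [CommSemiring k] [Group G] [Fintype G] [AddCommMonoid V]
    [Module k V] (ρ : Representation k G V) {f : G → k} (hf : ∀ g h, f (h * g * h⁻¹) = f g)
    (h : G) : Commute (∑ g, f g • ρ g) (ρ h) := by
  rw [Commute, SemiconjBy, Finset.sum_mul, Finset.mul_sum]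
  refine (Fintype.sum_equiv (MulAut.conj h).toEquiv _ _ fun g ↦ ?_).symm
  simp [hf, ← map_mul]

lemma finrank_smul_sum_smul_eq {k G V : Type*} [Field k] [IsAlgClosed k] [Group G] [Fintype G]
    [AddCommGroup V] [Module k V] [FiniteDimensional k V] (ρ : Representation k G V)
    [ρ.IsIrreducible] {f : G → k} (hf : ∀ g h, f (h * g * h⁻¹) = f g) :
    (Module.finrank k V : k) • ∑ g, f g • ρ g = (∑ g, f g * ρ.character g) • 1 := by
  obtain ⟨c, hc⟩ := IsIrreducible.algebraMap_intertwiningMap_bijective_of_isAlgClosed.2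
    (⟨∑ g, f g • ρ g, fun h ↦ (commute_sum_smul ρ hf h).eq⟩ : IntertwiningMap ρ ρ)
  have hscalar : ∑ g, f g • ρ g = c • (1 : Module.End k V) :=
    congrArg IntertwiningMap.toLinearMap hc.symm
  have htrace : ∑ g, f g * ρ.character g = c * Module.finrank k V := by
    simpa [character] using congrArg (LinearMap.trace k V) hscalar
  rw [hscalar, htrace, smul_smul, mul_comm]

lemma asAlgebraHom_ofModule' {k G M : Type*} [Field k] [Group G] [AddCommGroup M]
    [Module k[G] M] [Module k M] [IsScalarTower k k[G] M] :
    (ofModule' M : Representation k G M).asAlgebraHom = Algebra.lsmul k k M := by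
  simp [asAlgebraHom, ofModule']

lemma isIrreducible_ofModule' {k G M : Type*} [Field k] [Group G] [AddCommGroup M]
    [Module k[G] M] [Module k M] [IsScalarTower k k[G] M] [IsSimpleModule k[G] M] :
    (ofModule' M : Representation k G M).IsIrreducible := by
  rw [irreducible_iff_isSimpleModule_asModule]
  let e : (ofModule' M : Representation k G M).asModule ≃ₗ[k[G]] M :=
    { (ofModule' M : Representation k G M).asModuleEquiv with
      map_smul' z x := by simp [asAlgebraHom_ofModule'] }
  exact IsSimpleModule.congr e

lemma mem_jacobson_of_forall_smul_quotient_eq_zero {R : Type*} [Ring R] {z : R}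
    (hz : ∀ m : Submodule R R, IsSimpleModule R (R ⧸ m) → ∀ x : R ⧸ m, z • x = 0) :
    z ∈ Ring.jacobson R := by
  rw [Ring.jacobson, Module.jacobson, Submodule.mem_sInf]
  intro m hm
  have h := hz m (isSimpleModule_iff_isCoatom.2 hm) (Submodule.Quotient.mk 1)
  rwa [← Submodule.Quotient.mk_smul, smul_eq_mul, mul_one, Submodule.Quotient.mk_eq_zero] at h

variable {φ ψ : G → ℂ}

lemma IsIrrChar.isChar (hφ : IsIrrChar G φ) : IsChar G φ :=
  let ⟨V, _, hV⟩ := hφ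
  ⟨V, hV⟩

lemma IsChar.apply_conj (hφ : IsChar G φ) (g h : G) : φ (h * g * h⁻¹) = φ g := by
  obtain ⟨V, rfl⟩ := hφ
  exact V.char_conj g h

lemma IsChar.restrict (hφ : IsChar G φ) (H : Subgroup G) : IsChar H fun n ↦ φ n := by
  obtain ⟨V, rfl⟩ := hφ
  exact ⟨FDRep.of (V.ρ.comp H.subtype), rfl⟩

lemma IsChar.isIrrChar_iff [Fintype G] (hφ : IsChar G φ) :
    IsIrrChar G φ ↔ ∑ g, φ g * φ g⁻¹ = Nat.card G := by
  constructor
  · rintro ⟨V, hV, rfl⟩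
    exact V.simple_iff_char_is_norm_one.1 hV
  · obtain ⟨V, rfl⟩ := hφ
    exact fun h ↦ ⟨V, V.simple_iff_char_is_norm_one.2 h, rfl⟩

lemma IsIrrChar.sum_mul_apply_inv_eq_zero [Fintype G] (hφ : IsIrrChar G φ)
    (hψ : IsIrrChar G ψ) (hne : φ ≠ ψ) : ∑ g, φ g * ψ g⁻¹ = 0 := by
  obtain ⟨V, _, rfl⟩ := hφ
  obtain ⟨W, _, rfl⟩ := hψ
  have hcard : (Nat.card G : ℂ) ≠ 0 := NeZero.ne _
  have := invertibleOfNonzero hcard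
  have horth := FDRep.char_orthonormal V W
  rw [if_neg fun ⟨i⟩ ↦ hne (FDRep.char_iso i)] at horth
  exact (mul_eq_zero.1 horth).resolve_left (inv_ne_zero hcard)

lemma isIrrChar_character [Finite G] {V : Type} [AddCommGroup V] [Module ℂ V]
    [FiniteDimensional ℂ V] (ρ : Representation ℂ G V) [ρ.IsIrreducible] :
    IsIrrChar G ρ.character := by
  have := Fintype.ofFinite G
  have hcard : (Nat.card G : ℂ) ≠ 0 := NeZero.ne _
  have := invertibleOfNonzero hcard
  have horth := char_orthonormal ρ ρ
  rw [if_pos ⟨Representation.Equiv.refl ρ⟩, inv_mul_eq_one₀ hcard] at horth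
  exact IsChar.isIrrChar_iff ⟨FDRep.of ρ, rfl⟩ |>.2 horth.symm

lemma sum_single_smul_eq_zero [Fintype G] {M : Type} [AddCommGroup M] [Module ℂ[G] M]
    [Module ℂ M] [IsScalarTower ℂ ℂ[G] M] [IsSimpleModule ℂ[G] M] {f : G → ℂ}
    (hf : f ∈ classFunSubmodule G) (h0 : ∀ φ, IsIrrChar G φ → ∑ g, f g * φ g = 0) (x : M) :
    (∑ g, single g (f g) : ℂ[G]) • x = 0 := by
  let ρ : Representation ℂ G M := ofModule' M
  have : ρ.IsIrreducible := isIrreducible_ofModule'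
  have : FiniteDimensional ℂ M := Module.Finite.trans ℂ[G] M
  have : Nontrivial M := IsSimpleModule.nontrivial ℂ[G] M
  have hsum : (Module.finrank ℂ M : ℂ) • ∑ g, f g • ρ g = 0 := by
    rw [finrank_smul_sum_smul_eq ρ hf, h0 _ (isIrrChar_character ρ), zero_smul]
  have hρ : ρ.asAlgebraHom (∑ g, single g (f g)) = 0 := by
    simpa [asAlgebraHom_single, Module.finrank_pos.ne'] using hsum
  rw [asAlgebraHom_ofModule'] at hρ
  exact congr($hρ x)

theorem eq_zero_of_forall_isIrrChar_sum_mul_eq_zero [Fintype G] {f : G → ℂ}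
    (hf : f ∈ classFunSubmodule G) (h0 : ∀ φ, IsIrrChar G φ → ∑ g, f g * φ g = 0) : f = 0 := by
  have hzero : ∑ g, single g (f g) = (0 : ℂ[G]) := by
    rw [← Submodule.mem_bot ℂ[G], ← IsSemisimpleRing.jacobson_eq_bot]
    exact mem_jacobson_of_forall_smul_quotient_eq_zero fun m _ ↦ sum_single_smul_eq_zero hf h0
  classical
  ext g
  simpa [Finsupp.single_apply] using congr(MonoidAlgebra.coeff $hzero g)

end CharacterTheory

section CosetOrthogonality

open scoped IsMulCommutative

lemma sum_monoidHom_units_apply {A : Type*} [CommGroup A] [Finite A] [Fintype (A →* ℂˣ)]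
    [DecidableEq A] (a : A) :
    ∑ χ : A →* ℂˣ, (χ a : ℂ) = if a = 1 then (Nat.card A : ℂ) else 0 := by
  split_ifs with ha
  · simp [ha, ← Nat.card_eq_fintype_card, CommGroup.card_monoidHom_of_hasEnoughRootsOfUnity A ℂ]
  · obtain ⟨η, hη⟩ := CommGroup.exists_apply_ne_one_of_hasEnoughRootsOfUnity A ℂ ha
    have hshift : (η a : ℂ) * ∑ χ : A →* ℂˣ, (χ a : ℂ) = ∑ χ : A →* ℂˣ, (χ a : ℂ) := by
      rw [Finset.mul_sum]
      exact Fintype.sum_equiv (Equiv.mulLeft η) _ _ fun χ ↦ by simp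
    by_contra h
    exact hη (Units.ext ((mul_eq_right₀ h).1 hshift))

variable {N : Subgroup G} [N.Normal] {q : G} {φ ψ : G → ℂ}

@[simp]
lemma charMul_one : charMul N 1 φ = φ := by
  ext g
  simp [charMul]

lemma charMul_charMul (χ η : G ⧸ N →* ℂˣ) :
    charMul N χ (charMul N η φ) = charMul N (χ * η) φ := by
  ext g
  simp [charMul, mul_assoc]

lemma mem_qhatOrbit_self : φ ∈ qhatOrbit N φ := ⟨1, charMul_one.symm⟩

lemma qhatOrbit_eq_iff : qhatOrbit N φ = qhatOrbit N ψ ↔ ψ ∈ qhatOrbit N φ := by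
  refine ⟨fun h ↦ h ▸ mem_qhatOrbit_self, ?_⟩
  rintro ⟨χ, rfl⟩
  ext θ
  constructor
  · rintro ⟨η, rfl⟩
    have hη : η * χ⁻¹ * χ = η := inv_mul_cancel_right η χ
    exact ⟨η * χ⁻¹, by rw [charMul_charMul, hη]⟩
  · rintro ⟨η, rfl⟩
    exact ⟨η * χ, charMul_charMul η χ⟩

lemma mem_coset_iff {g : G} : g ∈ coset N q ↔ (g : G ⧸ N) = q := Iff.rfl

lemma Rset_eq_image :
    Rset N q = qhatOrbit N '' {φ | IsIrrChar G φ ∧ ∃ g ∈ coset N q, φ g ≠ 0} := by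
  ext S
  constructor
  · rintro ⟨⟨φ, hφ, rfl⟩, ψ, ⟨χ, rfl⟩, g, hg, hne⟩
    exact ⟨φ, ⟨hφ, g, hg, right_ne_zero_of_mul hne⟩, rfl⟩
  · rintro ⟨φ, ⟨hφ, hne⟩, rfl⟩
    exact ⟨⟨φ, hφ, rfl⟩, φ, mem_qhatOrbit_self, hne⟩

lemma IsChar.charMul (hφ : IsChar G φ) (χ : G ⧸ N →* ℂˣ) : IsChar G (charMul N χ φ) := by
  obtain ⟨V, rfl⟩ := hφ
  let ρ : Representation ℂ G V :=
    { toFun g := (χ g : ℂ) • V.ρ g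
      map_one' := by simp
      map_mul' g h := by simp [smul_smul, mul_comm] }
  refine ⟨FDRep.of ρ, funext fun g ↦ ?_⟩
  simp [_root_.charMul, FDRep.character, ρ]

lemma IsIrrChar.charMul [Finite G] (hφ : IsIrrChar G φ) (χ : G ⧸ N →* ℂˣ) :
    IsIrrChar G (charMul N χ φ) := by
  have := Fintype.ofFinite G
  have hsum := hφ.isChar.isIrrChar_iff.1 hφ
  rw [(hφ.isChar.charMul χ).isIrrChar_iff, ← hsum]
  refine Finset.sum_congr rfl fun g _ ↦ ?_
  have hχ : (χ g : ℂ) * (χ (g⁻¹ : G) : ℂ) = 1 := by simp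
  simp only [_root_.charMul]
  linear_combination φ g * φ g⁻¹ * hχ

/-- The pairing of `φ` with `g ↦ ψ g⁻¹` over the coset `qN`, without normalising factor. -/
noncomputable def cosetPairing [Fintype G] (N : Subgroup G) [N.Normal] (q : G)
    (φ ψ : G → ℂ) : ℂ :=
  ∑ g, (coset N q).indicator (fun g ↦ φ g * ψ g⁻¹) g

lemma cosetPairing_one [Fintype G] [Fintype N] : cosetPairing N 1 φ ψ = ∑ n : N, φ n * ψ ↑n⁻¹ := by
  classical
  have hN : coset N 1 = N := Set.ext fun g ↦ QuotientGroup.eq_one_iff g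
  rw [cosetPairing, hN, Finset.sum_indicator_eq_sum_filter]
  exact Finset.sum_subtype _ (by simp) _

lemma IsIrrChar.sum_charMul_mul_apply_inv [Fintype G] [DecidableEq (G → ℂ)]
    (hφ : IsIrrChar G φ) (hψ : IsIrrChar G ψ) (χ : G ⧸ N →* ℂˣ) :
    ∑ g, _root_.charMul N χ φ g * ψ g⁻¹ =
      if _root_.charMul N χ φ = ψ then (Nat.card G : ℂ) else 0 := by
  split_ifs with h
  · rw [h, ← hψ.isChar.isIrrChar_iff]
    exact hψ
  · exact (hφ.charMul χ).sum_mul_apply_inv_eq_zero hψ h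

variable [IsMulCommutative (G ⧸ N)]

theorem cosetPairing_eq [Fintype G] [DecidableEq (G → ℂ)] [Fintype (G ⧸ N →* ℂˣ)]
    (hφ : IsIrrChar G φ) (hψ : IsIrrChar G ψ) (q : G) :
    cosetPairing N q φ ψ =
      Nat.card N * ∑ χ : G ⧸ N →* ℂˣ with charMul N χ φ = ψ, (χ (q : G ⧸ N)⁻¹ : ℂ) := by
  classical
  have hQ : (Nat.card (G ⧸ N) : ℂ) ≠ 0 := NeZero.ne _
  refine mul_left_cancel₀ hQ ?_
  calc (Nat.card (G ⧸ N) : ℂ) * cosetPairing N q φ ψ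
      = ∑ g, φ g * ψ g⁻¹ * if (q : G ⧸ N)⁻¹ * g = 1 then (Nat.card (G ⧸ N) : ℂ) else 0 := by
        rw [cosetPairing, Finset.mul_sum]
        refine Finset.sum_congr rfl fun g _ ↦ ?_
        simp only [Set.indicator_apply, mem_coset_iff, inv_mul_eq_one, eq_comm (a := (q : G ⧸ N)),
          mul_ite, mul_zero]
        rw [mul_comm]
    _ = ∑ g, φ g * ψ g⁻¹ * ∑ χ : G ⧸ N →* ℂˣ, (χ ((q : G ⧸ N)⁻¹ * g) : ℂ) := by
        simp only [sum_monoidHom_units_apply]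
    _ = ∑ χ : G ⧸ N →* ℂˣ, (χ (q : G ⧸ N)⁻¹ : ℂ) * ∑ g, charMul N χ φ g * ψ g⁻¹ := by
        simp only [Finset.mul_sum]
        rw [Finset.sum_comm]
        refine Finset.sum_congr rfl fun χ _ ↦ Finset.sum_congr rfl fun g _ ↦ ?_
        rw [map_mul, Units.val_mul, charMul]
        ring
    _ = Nat.card G * ∑ χ : G ⧸ N →* ℂˣ with charMul N χ φ = ψ, (χ (q : G ⧸ N)⁻¹ : ℂ) := by
        simp [hφ.sum_charMul_mul_apply_inv hψ, Finset.sum_filter, Finset.mul_sum, mul_comm]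
    _ = _ := by
        rw [Subgroup.card_eq_card_quotient_mul_card_subgroup N]
        push_cast
        ring

lemma cosetPairing_eq_zero [Fintype G] (hφ : IsIrrChar G φ) (hψ : IsIrrChar G ψ)
    (hne : ψ ∉ qhatOrbit N φ) (q : G) : cosetPairing N q φ ψ = 0 := by
  classical
  have := Fintype.ofFinite (G ⧸ N →* ℂˣ)
  rw [cosetPairing_eq hφ hψ, Finset.filter_false_of_mem fun χ _ h ↦ hne ⟨χ, h.symm⟩]
  simp

lemma cosetPairing_self_eq_card_stabilizer [Fintype G] (hφ : IsIrrChar G φ)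
    (hq : ∀ χ : G ⧸ N →* ℂˣ, charMul N χ φ = φ → χ q = 1) :
    cosetPairing N q φ φ = Nat.card N * Nat.card {χ : G ⧸ N →* ℂˣ // charMul N χ φ = φ} := by
  classical
  have := Fintype.ofFinite (G ⧸ N →* ℂˣ)
  rw [cosetPairing_eq hφ hφ, Finset.sum_congr rfl fun χ hχ ↦ by
    rw [map_inv, hq χ (Finset.mem_filter.1 hχ).2, inv_one, Units.val_one]]
  simp [Nat.card_eq_fintype_card, Fintype.card_subtype]

lemma cosetPairing_self_ne_zero [Fintype G] (hφ : IsIrrChar G φ)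
    (hq : ∀ χ : G ⧸ N →* ℂˣ, charMul N χ φ = φ → χ q = 1) : cosetPairing N q φ φ ≠ 0 := by
  have : Nonempty {χ : G ⧸ N →* ℂˣ // charMul N χ φ = φ} := ⟨1, charMul_one⟩
  rw [cosetPairing_self_eq_card_stabilizer hφ hq]
  exact mul_ne_zero (NeZero.ne _) (NeZero.ne _)

lemma exists_mem_coset_apply_ne_zero_iff [Finite G] (hφ : IsIrrChar G φ) :
    (∃ g ∈ coset N q, φ g ≠ 0) ↔ ∀ χ : G ⧸ N →* ℂˣ, charMul N χ φ = φ → χ q = 1 := by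
  have := Fintype.ofFinite G
  constructor
  · rintro ⟨g, hg : (g : G ⧸ N) = q, hφg⟩ χ hχ
    rw [← hg]
    exact Units.ext ((mul_eq_right₀ hφg).1 (congrFun hχ g))
  · intro h
    by_contra! hzero
    refine cosetPairing_self_ne_zero hφ h (Finset.sum_eq_zero fun g _ ↦ ?_)
    exact Set.indicator_apply_eq_zero.2 fun hg ↦ by rw [hzero g hg, zero_mul]

lemma isIrrChar_restrict_iff [Finite G] (hφ : IsIrrChar G φ) :
    IsIrrChar N (fun n ↦ φ n) ↔ ∀ χ : G ⧸ N →* ℂˣ, charMul N χ φ = φ → χ = 1 := by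
  have := Fintype.ofFinite G
  have := Fintype.ofFinite N
  have hN : (Nat.card N : ℂ) ≠ 0 := NeZero.ne _
  have hpairing := cosetPairing_self_eq_card_stabilizer (N := N) (q := 1) hφ fun χ _ ↦ map_one χ
  rw [cosetPairing_one] at hpairing
  rw [(hφ.isChar.restrict N).isIrrChar_iff, hpairing, mul_eq_left₀ hN, Nat.cast_eq_one,
    Nat.card_eq_one_iff_exists]
  constructor
  · rintro ⟨η, hη⟩ χ hχ
    exact congrArg Subtype.val <| (hη ⟨χ, hχ⟩).trans (hη ⟨1, charMul_one⟩).symm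
  · exact fun h ↦ ⟨⟨1, charMul_one⟩, fun χ ↦ Subtype.ext (h χ χ.2)⟩

lemma restrict_eq_restrict_iff_mem_qhatOrbit [Finite G] (hφ : IsIrrChar G φ)
    (hψ : IsIrrChar G ψ) :
    (fun n : N ↦ φ n) = (fun n : N ↦ ψ n) ↔ ψ ∈ qhatOrbit N φ := by
  have := Fintype.ofFinite G
  have := Fintype.ofFinite N
  constructor
  · intro h
    by_contra hne
    have hpairing : cosetPairing N 1 φ ψ = cosetPairing N 1 φ φ := by
      simp only [cosetPairing_one]
      exact Finset.sum_congr rfl fun n _ ↦ by rw [congrFun h n⁻¹]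
    refine cosetPairing_self_ne_zero hφ (N := N) (q := 1) (fun χ _ ↦ map_one χ) ?_
    rw [← hpairing, cosetPairing_eq_zero hφ hψ hne]
  · rintro ⟨χ, rfl⟩
    ext n
    rw [charMul, (QuotientGroup.eq_one_iff _).2 n.2, map_one, Units.val_one, one_mul]

end CosetOrthogonality

section CosetClassFunctions

open Module

lemma finrank_eq_natCard_of_dual_pairwise {K V ι : Type*} [Field K] [AddCommGroup V] [Module K V]
    [FiniteDimensional K V] (e : ι → V) (ε : ι → Dual K V) (hself : ∀ i, ε i (e i) ≠ 0)
    (hpair : Pairwise fun i j ↦ ε i (e j) = 0) (htotal : ∀ v, (∀ i, ε i v = 0) → v = 0) :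
    finrank K V = Nat.card ι := by
  let δ : ι → Dual K V := fun i ↦ (ε i (e i))⁻¹ • ε i
  have hδself (i) : δ i (e i) = 1 := inv_mul_cancel₀ (hself i)
  have hδpair : Pairwise fun i j ↦ δ i (e j) = 0 := fun i j hij ↦ by simp [δ, hpair hij]
  have : Finite ι :=
    (LinearIndependent.of_pairwise_dual_eq_zero_one e δ hδpair hδself).finite
  have hdual : DualBases e δ :=
    { eval_same := hδself
      eval_of_ne := hδpair
      total := fun {v w} h ↦ sub_eq_zero.1 <| htotal _ fun i ↦ by
        have hi := sub_eq_zero.2 (h i)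
        rw [← map_sub] at hi
        exact (mul_eq_zero.1 hi).resolve_left (inv_ne_zero (hself i)) }
  exact finrank_eq_nat_card_basis hdual.basis

variable {N : Subgroup G} [N.Normal] {q : G}

lemma conj_mem_coset [IsMulCommutative (G ⧸ N)] {g : G} (hg : g ∈ coset N q) (h : G) :
    h * g * h⁻¹ ∈ coset N q := by
  rw [mem_coset_iff] at hg ⊢
  rw [QuotientGroup.mk_mul, QuotientGroup.mk_mul, QuotientGroup.mk_inv, mul_comm' (h : G ⧸ N),
    mul_inv_cancel_right, hg]

lemma mk_mem_Cset [IsMulCommutative (G ⧸ N)] {g : G} (hg : g ∈ coset N q) :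
    ConjClasses.mk g ∈ Cset N q := by
  intro a ha
  obtain ⟨h, rfl⟩ := isConj_iff.1 <| ConjClasses.mk_eq_mk_iff_isConj.1 <|
    (ConjClasses.mem_carrier_iff_mk_eq.1 ha).symm
  exact conj_mem_coset hg h

lemma indicator_mem_cosetClassFun [IsMulCommutative (G ⧸ N)] {f : G → ℂ}
    (hf : f ∈ classFunSubmodule G) : (coset N q).indicator f ∈ cosetClassFun N q := by
  refine ⟨fun g h ↦ ?_, fun g hg ↦ Set.indicator_of_notMem hg f⟩
  by_cases hg : g ∈ coset N q
  · rw [Set.indicator_of_mem hg, Set.indicator_of_mem (conj_mem_coset hg h), hf]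
  · have hconj : h * g * h⁻¹ ∉ coset N q := fun hc ↦ hg <| by
      simpa [mul_assoc] using conj_mem_coset hc h⁻¹
    rw [Set.indicator_of_notMem hg, Set.indicator_of_notMem hconj]

theorem finrank_cosetClassFun_eq_ncard_Cset [Finite G] [IsMulCommutative (G ⧸ N)] :
    finrank ℂ (cosetClassFun N q) = (Cset N q).ncard := by
  classical
  choose r hr using fun c : Cset N q ↦ ConjClasses.exists_rep c.1
  have hmk (g h : G) : ConjClasses.mk (h * g * h⁻¹) = ConjClasses.mk g :=
    ConjClasses.mk_eq_mk_iff_isConj.2 (isConj_iff.2 ⟨h, rfl⟩).symm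
  let e (c : Cset N q) : cosetClassFun N q :=
    ⟨fun g ↦ if ConjClasses.mk g = c then 1 else 0, fun g h ↦ by simp only [hmk], fun g hg ↦
      if_neg fun hgc ↦ hg <| c.2 <| ConjClasses.mem_carrier_iff_mk_eq.2 hgc⟩
  let ε (c : Cset N q) : Dual ℂ (cosetClassFun N q) := .proj (r c) ∘ₗ (cosetClassFun N q).subtype
  refine finrank_eq_natCard_of_dual_pairwise e ε (fun c ↦ ?_) (fun c d hcd ↦ ?_) fun f hf ↦ ?_
  · simp [e, ε, hr]
  · simpa [e, ε, hr] using Subtype.coe_ne_coe.2 hcd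
  · ext g
    by_cases hg : g ∈ coset N q
    · obtain ⟨h, hh⟩ := isConj_iff.1 <| ConjClasses.mk_eq_mk_iff_isConj.1 <| hr ⟨_, mk_mem_Cset hg⟩
      rw [← hh]
      exact (f.2.1 _ h).trans (hf _)
    · exact f.2.2 g hg

lemma eq_zero_of_mem_cosetClassFun [Fintype G] {f : G → ℂ} (hf : f ∈ cosetClassFun N q)
    (h0 : ∀ φ, IsIrrChar G φ → (∃ g ∈ coset N q, φ g ≠ 0) → ∑ g, f g * φ g = 0) : f = 0 := by
  refine eq_zero_of_forall_isIrrChar_sum_mul_eq_zero hf.1 fun φ hφ ↦ ?_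
  by_cases hne : ∃ g ∈ coset N q, φ g ≠ 0
  · exact h0 φ hφ hne
  · refine Finset.sum_eq_zero fun g _ ↦ ?_
    by_cases hg : g ∈ coset N q
    · rw [not_not.1 fun h ↦ hne ⟨g, hg, h⟩, mul_zero]
    · rw [hf.2 g hg, zero_mul]

lemma sum_mul_charMul_of_mem_cosetClassFun [Fintype G] {f φ : G → ℂ}
    (hf : f ∈ cosetClassFun N q) (χ : G ⧸ N →* ℂˣ) :
    ∑ g, f g * charMul N χ φ g = χ q * ∑ g, f g * φ g := by
  rw [Finset.mul_sum]
  refine Finset.sum_congr rfl fun g _ ↦ ?_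
  by_cases hg : g ∈ coset N q
  · rw [charMul, mem_coset_iff.1 hg, mul_left_comm]
  · simp [hf.2 g hg]

theorem finrank_cosetClassFun_eq_ncard_Rset [Finite G] [IsMulCommutative (G ⧸ N)] :
    finrank ℂ (cosetClassFun N q) = (Rset N q).ncard := by
  have := Fintype.ofFinite G
  choose ρ hρ horbit using fun S : Rset N q ↦ Rset_eq_image.le S.2
  let e (S : Rset N q) : cosetClassFun N q :=
    ⟨(coset N q).indicator fun g ↦ ρ S g⁻¹, indicator_mem_cosetClassFun fun g h ↦ by
      rw [conj_inv, (hρ S).1.isChar.apply_conj]⟩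
  let ε (S : Rset N q) : Dual ℂ (cosetClassFun N q) :=
    (∑ g, ρ S g • .proj g) ∘ₗ (cosetClassFun N q).subtype
  have hε (S f) : ε S f = ∑ g, f.1 g * ρ S g := by simp [ε, mul_comm]
  have hpairing (S T) : ε S (e T) = cosetPairing N q (ρ S) (ρ T) := by
    rw [hε, cosetPairing]
    refine Finset.sum_congr rfl fun g _ ↦ ?_
    simp only [e, Set.indicator_mul_right, mul_comm]
  refine finrank_eq_natCard_of_dual_pairwise e ε (fun S ↦ ?_) (fun S T hST ↦ ?_) fun f hf ↦ ?_
  · rw [hpairing]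
    exact cosetPairing_self_ne_zero (hρ S).1 <|
      (exists_mem_coset_apply_ne_zero_iff (hρ S).1).1 (hρ S).2
  · change ε S (e T) = 0
    rw [hpairing]
    refine cosetPairing_eq_zero (hρ S).1 (hρ T).1 (fun h ↦ hST ?_) q
    rw [← qhatOrbit_eq_iff, horbit, horbit] at h
    exact Subtype.ext h
  · refine Subtype.ext <| eq_zero_of_mem_cosetClassFun f.2 fun φ hφ hne ↦ ?_
    let S : Rset N q := ⟨qhatOrbit N φ, Rset_eq_image.ge ⟨φ, ⟨hφ, hne⟩, rfl⟩⟩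
    obtain ⟨χ, hχ⟩ := qhatOrbit_eq_iff.1 (horbit S)
    rw [hχ, sum_mul_charMul_of_mem_cosetClassFun f.2, ← hε, hf, mul_zero]

theorem ncard_Cset_eq_ncard_Rset [Finite G] [IsMulCommutative (G ⧸ N)] :
    (Cset N q).ncard = (Rset N q).ncard := by
  rw [← finrank_cosetClassFun_eq_ncard_Cset, finrank_cosetClassFun_eq_ncard_Rset]

end CosetClassFunctions

section CyclicQuotient

lemma ncard_image_eq_of_forall_eq_iff {α β γ : Type*} {s : Set α} {f : α → β} {g : α → γ}
    (h : ∀ a ∈ s, ∀ b ∈ s, f a = f b ↔ g a = g b) : (f '' s).ncard = (g '' s).ncard := by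
  obtain ⟨t, hts, hft⟩ := Set.exists_subset_bijOn s f
  have hgt : Set.BijOn g t (g '' s) := by
    refine ⟨fun a ha ↦ ⟨a, hts ha, rfl⟩, fun a ha b hb hab ↦ ?_, ?_⟩
    · exact hft.injOn ha hb ((h a (hts ha) b (hts hb)).2 hab)
    · rintro _ ⟨a, ha, rfl⟩
      obtain ⟨b, hb, hba⟩ := hft.surjOn ⟨a, ha, rfl⟩
      exact ⟨b, hb, (h b (hts hb) a ha).1 hba⟩
  rw [← hft.image_eq, ← hgt.image_eq, hft.injOn.ncard_image, hgt.injOn.ncard_image]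

variable [Finite G] {N : Subgroup G} [N.Normal] {q : G} {φ : G → ℂ}

lemma isIrrChar_restrict_iff_exists_ne_zero (hgen : ∀ x : G ⧸ N, x ∈ Subgroup.zpowers (q : G ⧸ N))
    (hφ : IsIrrChar G φ) :
    IsIrrChar N (fun n ↦ φ n) ↔ ∃ g ∈ coset N q, φ g ≠ 0 := by
  have : IsCyclic (G ⧸ N) := ⟨q, hgen⟩
  rw [isIrrChar_restrict_iff hφ, exists_mem_coset_apply_ne_zero_iff hφ]
  refine forall₂_congr fun χ _ ↦ ?_
  rw [MonoidHom.eq_iff_eq_on_generator hgen, MonoidHom.one_apply]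

theorem setOf_extendable_eq_image (hgen : ∀ x : G ⧸ N, x ∈ Subgroup.zpowers (q : G ⧸ N)) :
    {τ : N → ℂ | IsIrrChar N τ ∧ ∃ ρ, IsIrrChar G ρ ∧ (fun n : N ↦ ρ n) = τ} =
      (fun φ (n : N) ↦ φ n) '' {φ | IsIrrChar G φ ∧ ∃ g ∈ coset N q, φ g ≠ 0} := by
  ext τ
  constructor
  · rintro ⟨hτ, φ, hφ, rfl⟩
    exact ⟨φ, ⟨hφ, (isIrrChar_restrict_iff_exists_ne_zero hgen hφ).1 hτ⟩, rfl⟩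
  · rintro ⟨φ, ⟨hφ, hne⟩, rfl⟩
    exact ⟨(isIrrChar_restrict_iff_exists_ne_zero hgen hφ).2 hne, φ, hφ, rfl⟩

end CyclicQuotient

/-- If `G ⧸ N` is cyclic generated by `qN`, the number of conjugacy
classes of `G` in `qN` equals the number of irreducible characters of `N` that extend to
a (irreducible) character of `G`. -/
theorem conjClasses_coset_card_eq_extendable_card
    (G : Type) [Group G] [Fintype G] (N : Subgroup G) [N.Normal] (q : G)
    (hgen : ∀ x : G ⧸ N, x ∈ Subgroup.zpowers ((q : G ⧸ N))) :
    (Cset N q).ncard =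
      {τ : ↥N → ℂ | IsIrrChar ↥N τ ∧
        ∃ ρ : G → ℂ, IsIrrChar G ρ ∧ (fun n : ↥N => ρ ↑n) = τ}.ncard := by
  have : IsCyclic (G ⧸ N) := ⟨q, hgen⟩
  rw [ncard_Cset_eq_ncard_Rset, Rset_eq_image, setOf_extendable_eq_image hgen]
  refine ncard_image_eq_of_forall_eq_iff fun φ hφ ψ hψ ↦ ?_
  rw [qhatOrbit_eq_iff, restrict_eq_restrict_iff_mem_qhatOrbit hφ.1 hψ.1]
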